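/- arXiv:1805.08562 — 2 statements merged into one kernel-verified Lean document; each statement's English description precedes it below -/
import Mathlib

section
/- (Ruling out bad lower-order models) Let h < d and suppose the data sequence satisfies (π̂_h(t) − π̂_d(t)) t ≥ α_{h,d} t for all t ≥ t_0(h), for some α_{h,d} > 0. Then for ContextTreeAdaHedge(D) with prior g_prop(h') = 2^{-2^{h'+1}} and nonincreasing learning rates with final value η_T, Σ_{t=1}^T q_t(h; η_t, g_prop) · w^{(h)}_{t,1−Y*_t}(η_t) ≤ t'_low(h) + 1/(η_T α_{h,d}), where t'_low(h) = max{ t_0(h), 2·2^d ln 2/(η_T α_{h,d}) }. -/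
open Finset

noncomputable section

namespace CTAH

/-- Truncation of a context in `{0,1}^D` to its sub-context of length `h`. -/
def trunc {D : ℕ} (h : ℕ) (x : Fin D → Bool) : Fin h → Bool :=
  fun i => if hi : (i : ℕ) < D then x ⟨i, hi⟩ else false

variable {D : ℕ}

/-- Cumulative contextual loss `L_{x,t,y} = ∑_{s=1}^t 1[X_s(h) = x, Y_s ≠ y]`. -/
def Lctx (X : ℕ → Fin D → Bool) (Y : ℕ → Bool) (h : ℕ)
    (x : Fin h → Bool) (t : ℕ) (y : Bool) : ℝ :=
  ∑ s ∈ Finset.Icc 1 t, if trunc h (X s) = x ∧ Y s ≠ y then 1 else 0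

/-- Appearance frequency `N_t(x) = ∑_{s=1}^{t-1} 1[X_s(h) = x]` of a sub-context. -/
def Nctx (X : ℕ → Fin D → Bool) (h t : ℕ) (x : Fin h → Bool) : ℕ :=
  ∑ s ∈ Finset.Icc 1 (t - 1), if trunc h (X s) = x then 1 else 0

/-- The gap `D_t(h) = L_{X_t(h),t,1−Y*_t} − L_{X_t(h),t,Y*_t}` between the wrong and the
true predictor at round `t`, for the current length-`h` sub-context; `Ys` is the true
best prediction sequence `Y*`. -/
def Dgap (X : ℕ → Fin D → Bool) (Y : ℕ → Bool) (Ys : ℕ → Bool) (h t : ℕ) : ℝ :=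
  Lctx X Y h (trunc h (X t)) t (!(Ys t)) - Lctx X Y h (trunc h (X t)) t (Ys t)

/-- Scaled estimated unpredictability `t · π̂_h(t) = ∑_{x(h)} min_y L_{x(h),t,y}`. -/
def hatPiT (X : ℕ → Fin D → Bool) (Y : ℕ → Bool) (h t : ℕ) : ℝ :=
  ∑ x : Fin h → Bool, min (Lctx X Y h x t false) (Lctx X Y h x t true)

/-- The model-order-proportional prior function `g_prop(h) = 2^{-2^{h+1}}`. -/
def gprop (h : ℕ) : ℝ := (2 : ℝ) ^ (-(2 : ℤ) ^ (h + 1))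

/-- Unnormalized posterior weight of model order `h`:
`Q_t(h; η, g) = g(h) ∏_{x(h)} (∑_y e^{−η L_{x(h),t,y}})`. -/
def Qmod (X : ℕ → Fin D → Bool) (Y : ℕ → Bool) (g : ℕ → ℝ) (η : ℝ) (t h : ℕ) : ℝ :=
  g h * ∏ x : Fin h → Bool, (∑ y : Bool, Real.exp (-η * Lctx X Y h x t y))

/-- Posterior probability `q_t(h; η, g) = Q_t(h)/∑_{h'=0}^D Q_t(h')` that the algorithm
selects the `h`-th order model. -/
def qmod (D : ℕ) (X : ℕ → Fin D → Bool) (Y : ℕ → Bool) (g : ℕ → ℝ) (η : ℝ)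
    (t h : ℕ) : ℝ :=
  Qmod X Y g η t h / ∑ h' ∈ Finset.range (D + 1), Qmod X Y g η t h'

/-- The probability `w^{(h)}_{t,1−Y*_t}(η) = e^{−η D_t(h)}/(1 + e^{−η D_t(h)})` with which
the uniform-prior `h`-th order algorithm predicts the wrong label `1 − Y*_t`. -/
def wbad (X : ℕ → Fin D → Bool) (Y : ℕ → Bool) (Ys : ℕ → Bool) (η : ℝ) (h t : ℕ) : ℝ :=
  Real.exp (-η * Dgap X Y Ys h t) / (1 + Real.exp (-η * Dgap X Y Ys h t))



lemma prod_upper (X : ℕ → Fin D → Bool) (Y : ℕ → Bool) (η : ℝ) (hη : 0 < η) (t h : ℕ) :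
    ∏ x : Fin h → Bool, (∑ y : Bool, Real.exp (-η * Lctx X Y h x t y)) ≤
      2 ^ (2 ^ h) * Real.exp (-η * hatPiT X Y h t) := by
  have : (2:ℝ) ^ (2 ^ h) * Real.exp (-η * hatPiT X Y h t) =
      ∏ x : Fin h → Bool, (2 * Real.exp (-η * min (Lctx X Y h x t false) (Lctx X Y h x t true))) := by
    rw [Finset.prod_mul_distrib, ← Real.exp_sum, ← Finset.mul_sum]
    simp [hatPiT]
  rw [this]
  apply Finset.prod_le_prod
  · intros; positivity
  · intro x _
    rw [Fintype.sum_bool]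
    have h1 : Real.exp (-η * Lctx X Y h x t true) ≤
        Real.exp (-η * min (Lctx X Y h x t false) (Lctx X Y h x t true)) := by
      apply Real.exp_le_exp.2
      nlinarith [min_le_right (Lctx X Y h x t false) (Lctx X Y h x t true)]
    have h2 : Real.exp (-η * Lctx X Y h x t false) ≤
        Real.exp (-η * min (Lctx X Y h x t false) (Lctx X Y h x t true)) := by
      apply Real.exp_le_exp.2
      nlinarith [min_le_left (Lctx X Y h x t false) (Lctx X Y h x t true)]
    linarith

lemma prod_lower (X : ℕ → Fin D → Bool) (Y : ℕ → Bool) (η : ℝ) (t h : ℕ) :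
    Real.exp (-η * hatPiT X Y h t) ≤
    ∏ x : Fin h → Bool, (∑ y : Bool, Real.exp (-η * Lctx X Y h x t y)) := by
  have : Real.exp (-η * hatPiT X Y h t) =
      ∏ x : Fin h → Bool, (Real.exp (-η * min (Lctx X Y h x t false) (Lctx X Y h x t true))) := by
    rw [← Real.exp_sum, ← Finset.mul_sum]
    simp [hatPiT]
  rw [this]
  apply Finset.prod_le_prod
  · intros; positivity
  · intro x _
    rw [Fintype.sum_bool]
    have e1 := Real.exp_pos (-η * Lctx X Y h x t true)
    have e2 := Real.exp_pos (-η * Lctx X Y h x t false)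
    rcases min_choice (Lctx X Y h x t false) (Lctx X Y h x t true) with h | h <;> rw [h] <;> linarith

lemma gprop_eq (h : ℕ) : gprop h = ((2:ℝ) ^ (2 ^ (h+1)))⁻¹ := by
  unfold gprop
  rw [zpow_neg]
  congr 1

lemma Qmod_pos (X : ℕ → Fin D → Bool) (Y : ℕ → Bool) (η : ℝ) (t h : ℕ) :
    0 < Qmod X Y gprop η t h := by
  unfold Qmod
  rw [gprop_eq]
  have := lt_of_lt_of_le (Real.exp_pos _) (prod_lower X Y η t h)
  positivity

lemma qmod_le (D d h : ℕ) (hdD : d ≤ D)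
    (X : ℕ → Fin D → Bool) (Y : ℕ → Bool) (η : ℝ) (hη : 0 < η) (t : ℕ) :
    qmod D X Y gprop η t h ≤
      Real.exp (2 * 2 ^ d * Real.log 2 - η * (hatPiT X Y h t - hatPiT X Y d t)) := by
  have hS : Qmod X Y gprop η t d ≤ ∑ h' ∈ Finset.range (D + 1), Qmod X Y gprop η t h' :=
    Finset.single_le_sum (f := fun h' => Qmod X Y gprop η t h')
      (fun i _ => (Qmod_pos X Y η t i).le) (Finset.mem_range.2 (by omega))
  have hd := Qmod_pos X Y η t d
  unfold qmod
  rw [div_le_iff₀ (hd.trans_le hS)]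
  refine le_trans ?_ (mul_le_mul_of_nonneg_left hS (Real.exp_pos _).le)
  have hu := prod_upper X Y η hη t h
  have hl := prod_lower X Y η t d
  have e1 : Real.exp (2 * 2 ^ d * Real.log 2 - η * (hatPiT X Y h t - hatPiT X Y d t)) =
      2 ^ (2 ^ (d+1)) * (Real.exp (-η * hatPiT X Y h t) * Real.exp (η * hatPiT X Y d t)) := by
    rw [← Real.exp_add]
    have : (2:ℝ) ^ (2 ^ (d+1)) = Real.exp (2 * 2 ^ d * Real.log 2) := by
      rw [← Real.rpow_natCast, Real.rpow_def_of_pos (by norm_num)]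
      congr 1; push_cast; ring
    rw [this, ← Real.exp_add]
    congr 1; ring
  have e2 : Real.exp (η * hatPiT X Y d t) * Real.exp (-η * hatPiT X Y d t) = 1 := by
    rw [← Real.exp_add]; simp
  have A : Qmod X Y gprop η t h ≤ Real.exp (-η * hatPiT X Y h t) := by
    unfold Qmod
    rw [gprop_eq, inv_mul_le_iff₀ (by positivity)]
    refine hu.trans ?_
    gcongr
    · norm_num
    · norm_num
    · omega
  have B : (2 ^ (2 ^ (d+1)) : ℝ)⁻¹ * Real.exp (-η * hatPiT X Y d t) ≤ Qmod X Y gprop η t d := by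
    unfold Qmod
    rw [gprop_eq]
    gcongr
  refine A.trans ?_
  refine le_trans ?_ (mul_le_mul_of_nonneg_left B (Real.exp_pos _).le)
  rw [e1]
  have h0 : (2 ^ (2 ^ (d+1)) : ℝ) ≠ 0 := by positivity
  apply le_of_eq
  calc Real.exp (-η * hatPiT X Y h t)
      = Real.exp (-η * hatPiT X Y h t) * ((2 ^ (2 ^ (d+1)) : ℝ) * (2 ^ (2 ^ (d+1)) : ℝ)⁻¹) *
        (Real.exp (η * hatPiT X Y d t) * Real.exp (-η * hatPiT X Y d t)) := by
        rw [e2, mul_inv_cancel₀ h0]; ring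
    _ = _ := by ring

lemma qmod_le_one (D h : ℕ) (hdD : h ≤ D)
    (X : ℕ → Fin D → Bool) (Y : ℕ → Bool) (η : ℝ) (t : ℕ) :
    0 ≤ qmod D X Y gprop η t h ∧ qmod D X Y gprop η t h ≤ 1 := by
  have hS : Qmod X Y gprop η t h ≤ ∑ h' ∈ Finset.range (D + 1), Qmod X Y gprop η t h' :=
    Finset.single_le_sum (f := fun h' => Qmod X Y gprop η t h')
      (fun i _ => (Qmod_pos X Y η t i).le) (Finset.mem_range.2 (by omega))
  have hd := Qmod_pos X Y η t h
  unfold qmod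
  exact ⟨div_nonneg hd.le (hd.le.trans hS), (div_le_one (hd.trans_le hS)).2 hS⟩

lemma sum_bound (f : ℕ → ℝ) (a τ : ℝ) (ha : 0 < a) (hτ : 0 < τ) (T : ℕ)
    (h1 : ∀ t, f t ≤ 1) (h2 : ∀ t ≤ T, τ ≤ t → f t ≤ Real.exp (-(a * (t - τ)))) :
    ∑ t ∈ Finset.Icc 1 T, f t ≤ τ + 1 / a := by
  have hc : ∀ N : ℕ, ∑ t ∈ Finset.Icc 1 N, f t ≤ N := by
    intro N
    refine (Finset.sum_le_sum (fun t _ => h1 t)).trans ?_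
    simp
  have key : ∀ N : ℕ, N ≤ T → τ ≤ N →
      ∑ t ∈ Finset.Icc 1 N, f t ≤ τ + 1 / a - Real.exp (-(a * (N - τ))) / a := by
    intro N
    induction N with
    | zero => intro _ h; simp at h; linarith
    | succ N ih =>
      intro hN hτN
      rw [Finset.sum_Icc_succ_top (by omega)]
      have hf := h2 (N+1) hN hτN
      push_cast at hf hτN ⊢
      by_cases hc' : τ ≤ N
      · have := ih (by omega) hc'
        have e : Real.exp (-(a * (N - τ))) = Real.exp (-(a * (N + 1 - τ))) * Real.exp a := by
          rw [← Real.exp_add]; congr 1; ring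
        have e3 := Real.add_one_le_exp a
        have p := Real.exp_pos (-(a * (N + 1 - τ)))
        have : Real.exp (-(a * (N + 1 - τ))) ≤
            Real.exp (-(a * (N - τ))) / a - Real.exp (-(a * (N + 1 - τ))) / a := by
          rw [← sub_div, le_div_iff₀ ha, e]
          nlinarith
        linarith
      · push Not at hc'
        have := hc N
        have p := Real.exp_pos (-(a * (N + 1 - τ)))
        have e : Real.exp (-(a * (N + 1 - τ))) * Real.exp (a * (N + 1 - τ)) = 1 := by
          rw [← Real.exp_add]; simp
        have e3 := Real.add_one_le_exp (a * (N + 1 - τ))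
        set y := Real.exp (-(a * (N + 1 - τ)))
        have k1 : y * (a * (N + 1 - τ) + 1) ≤ 1 := by
          exact (mul_le_mul_of_nonneg_left e3 p.le).trans e.le
        have hb : 0 ≤ a * (τ - N) := mul_nonneg ha.le (by linarith)
        have hb' : 0 ≤ a * (N + 1 - τ) := mul_nonneg ha.le (by linarith)
        have k2 : y * (a + 1) ≤ a * (τ - N) + 1 := by
          have := mul_le_mul_of_nonneg_right k1 (by linarith : 0 ≤ a * (τ - N) + 1)
          have := mul_nonneg p.le (mul_nonneg hb hb')
          nlinarith
        have : y ≤ (τ - N) + 1 / a - y / a := by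
          have : (τ - N) + 1 / a - y / a = (a * (τ - N) + 1 - y) / a := by
            field_simp
          rw [this, le_div_iff₀ ha]; linarith
        linarith
  by_cases hT : τ ≤ T
  · have := key T le_rfl hT
    have : 0 < Real.exp (-(a * (T - τ))) / a := by positivity
    linarith
  · have := hc T
    have : 0 < 1 / a := by positivity
    push Not at hT
    linarith

/-- Ruling out bad lower-order models.
Let `h < d` and suppose the data sequence satisfies `(π̂_h(t) − π̂_d(t)) t ≥ α_{h,d} t`
for all `t ≥ t₀`, for some `α_{h,d} > 0`. Then, for ContextTreeAdaHedge(D) with the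
prior `g_prop` and nonincreasing learning rates with final value `η_T > 0`,
`∑_{t=1}^T q_t(h; η_t, g_prop) w^{(h)}_{t,1−Y*_t}(η_t) ≤ t'_low(h) + 1/(η_T α_{h,d})`,
where `t'_low(h) = max {t₀, 2·2^d ln 2/(η_T α_{h,d})}`. -/
theorem ruling_out_lower_order (D d h : ℕ) (hdD : d ≤ D) (hhd : h < d)
    (X : ℕ → Fin D → Bool) (Y : ℕ → Bool)
    (αhd : ℝ) (hα : 0 < αhd) (t₀ : ℝ) (ht₀ : 0 < t₀)
    (η : ℕ → ℝ) (hmono : ∀ s t : ℕ, s ≤ t → η t ≤ η s) (hpos : ∀ t, 0 < η t)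
    (T : ℕ)
    (hsep : ∀ t : ℕ, t₀ ≤ (t : ℝ) →
      αhd * (t : ℝ) ≤ hatPiT X Y h t - hatPiT X Y d t)
    (wb : ℕ → ℝ) (hwb0 : ∀ t, 0 ≤ wb t) (hwb1 : ∀ t, wb t ≤ 1) :
    ∑ t ∈ Finset.Icc 1 T, qmod D X Y gprop (η t) t h * wb t ≤
      max t₀ (2 * 2 ^ d * Real.log 2 / (η T * αhd)) + 1 / (η T * αhd) := by
  have ha : 0 < η T * αhd := mul_pos (hpos T) hα
  apply sum_bound _ _ _ ha (lt_of_lt_of_le ht₀ (le_max_left _ _))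
  · intro t
    have := qmod_le_one D h (by omega) X Y (η t) t
    exact mul_le_one₀ this.2 (hwb0 t) (hwb1 t)
  · intro t htT ht
    have h0 := qmod_le_one D h (by omega) X Y (η t) t
    refine (mul_le_of_le_one_right h0.1 (hwb1 t)).trans ?_
    refine (qmod_le D d h hdD X Y (η t) (hpos t) t).trans ?_
    apply Real.exp_le_exp.2
    have hs := hsep t ((le_max_left _ _).trans ht)
    have hm := hmono t T htT
    have hτ := le_max_right t₀ (2 * 2 ^ d * Real.log 2 / (η T * αhd))
    rw [div_le_iff₀ ha] at hτ
    have ht' : 0 ≤ αhd * (t:ℝ) := by positivity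
    have k1 := mul_le_mul_of_nonneg_left hs (hpos t).le
    have k2 := mul_le_mul_of_nonneg_right hm ht'
    nlinarith

end CTAH
end
end

section
/- (Equivalence of the naive and efficient updates) For any prior function g: {0,...,D} → ℝ>0, any learning rate η_t > 0, and any cumulative contextual losses, the tree-expert exponential weights update and the efficient contextual update induce the same prediction distribution: for every y ∈ {0,1}, Σ_{f ∈ F_D : f(X_t) = y} w^tree_{t,f}(η_t; g) = w_{t,y}(η_t; g). Equivalently (the key distributive-law identity): Σ_{f∈F_D} (Σ_{h=order(f)}^D g(h)) Π_{x(h)∈{0,1}^h} e^{−η_t L_{x(h),t,f(x(h))}} = Σ_{h=0}^D g(h) Π_{x(h)∈{0,1}^h} ( Σ_{y∈{0,1}} e^{−η_t L_{x(h),t,y}} ). -/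
open Finset

noncomputable section

namespace CTAH

/-- The order of a tree expert `f ∈ F_D`: the least `e` such that `f` factors through
the length-`e` sub-context. -/
def order {D : ℕ} (f : (Fin D → Bool) → Bool) : ℕ :=
  sInf {e | ∃ f' : (Fin e → Bool) → Bool, ∀ x : Fin D → Bool, f x = f' (trunc e x)}

variable {D : ℕ}

/-- Unnormalized prior weight put on a tree expert by the prior function `g`:
`∑_{h = order f}^{D} g h`. -/
def pri (D : ℕ) (g : ℕ → ℝ) (f : (Fin D → Bool) → Bool) : ℝ :=
  ∑ h ∈ Finset.Icc (order f) D, g h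

/-- Cumulative loss of a tree expert `f ∈ F_D`, written contextually:
`L_{t,f} = ∑_{x(D)} L_{x(D),t,f(x(D))}`. -/
def Ltree (X : ℕ → Fin D → Bool) (Y : ℕ → Bool) (f : (Fin D → Bool) → Bool)
    (t : ℕ) : ℝ :=
  ∑ x : Fin D → Bool, Lctx X Y D x t (f x)

/-- The reweighted prior `g'(h; η_t)` of the efficient update. -/
def gEff (X : ℕ → Fin D → Bool) (Y : ℕ → Bool) (g : ℕ → ℝ) (η : ℝ) (t h : ℕ) : ℝ :=
  g h * ∏ x ∈ Finset.univ.erase (trunc h (X t)),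
    (∑ y : Bool, Real.exp (-η * Lctx X Y h x t y))

lemma trunc_trunc {D e h : ℕ} (heh : e ≤ h) (x : Fin D → Bool) :
    trunc e (trunc h x) = trunc e x := by
  funext i
  have : (i : ℕ) < h := lt_of_lt_of_le i.2 heh
  simp [trunc, this]

lemma trunc_surj {D h : ℕ} (hh : h ≤ D) : Function.Surjective (trunc (D := D) h) := by
  intro y
  refine ⟨trunc D y, ?_⟩
  rw [trunc_trunc hh]
  funext i
  simp [trunc]

lemma order_le_iff {D h : ℕ} (f : (Fin D → Bool) → Bool) (hh : h ≤ D) :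
    order f ≤ h ↔ ∃ f' : (Fin h → Bool) → Bool, (fun x => f' (trunc h x)) = f := by
  constructor
  · intro ho
    have hne : {e | ∃ f' : (Fin e → Bool) → Bool,
        ∀ x : Fin D → Bool, f x = f' (trunc e x)}.Nonempty := by
      refine ⟨D, f, fun x => ?_⟩
      congr 1
      funext i
      simp [trunc]
    obtain ⟨f', hf'⟩ := Nat.sInf_mem hne
    refine ⟨fun z => f' (trunc _ z), ?_⟩
    funext x
    rw [hf' x]
    have := trunc_trunc (D := D) ho x
    exact congrArg f' this
  · rintro ⟨f', rfl⟩
    exact Nat.sInf_le ⟨f', fun x => rfl⟩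

lemma sum_Lctx {D : ℕ} (X : ℕ → Fin D → Bool) (Y : ℕ → Bool) (h t : ℕ)
    (f : (Fin h → Bool) → Bool) :
    ∑ x, Lctx X Y h x t (f x) =
      ∑ s ∈ Finset.Icc 1 t, if Y s ≠ f (trunc h (X s)) then (1:ℝ) else 0 := by
  unfold Lctx
  rw [Finset.sum_comm]
  refine Finset.sum_congr rfl fun s _ => ?_
  rw [Finset.sum_eq_single (trunc h (X s))]
  · simp
  · intro b _ hb
    simp [Ne.symm hb]
  · simp

lemma trunc_self {D : ℕ} (x : Fin D → Bool) : trunc D x = x := by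
  funext i
  simp [trunc]

lemma key {D : ℕ} (g : ℕ → ℝ) (η : ℝ) (t : ℕ)
    (X : ℕ → Fin D → Bool) (Y : ℕ → Bool) (c : Bool → ℝ) :
    ∑ f : (Fin D → Bool) → Bool, c (f (X t)) * (pri D g f * Real.exp (-η * Ltree X Y f t)) =
      ∑ h ∈ Finset.range (D + 1), g h * ∑ f : (Fin h → Bool) → Bool,
        c (f (trunc h (X t))) * ∏ x, Real.exp (-η * Lctx X Y h x t (f x)) := by
  classical
  have h1 : ∀ f : (Fin D → Bool) → Bool, pri D g f =
      ∑ h ∈ Finset.range (D + 1), if order f ≤ h then g h else 0 := by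
    intro f
    rw [pri, ← Finset.sum_filter]
    congr 1
    ext h
    simp
    omega
  simp_rw [h1, Finset.sum_mul, Finset.mul_sum]
  rw [Finset.sum_comm]
  refine Finset.sum_congr rfl fun h hh => ?_
  have hD : h ≤ D := by simp at hh; omega
  have hinj : Function.Injective
      (fun (f' : (Fin h → Bool) → Bool) => (fun x : Fin D → Bool => f' (trunc h x))) :=
    (trunc_surj hD).injective_comp_right
  symm
  refine Finset.sum_of_injOn (fun f' => fun x => f' (trunc h x)) hinj.injOn
    (by simp) ?_ ?_
  · intro f _ hf
    have : ¬ order f ≤ h := by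
      rw [order_le_iff f hD]
      rintro ⟨f', hf'⟩
      exact hf ⟨f', by simp, hf'⟩
    simp [this]
  · intro f _
    have : order (fun x : Fin D → Bool => f (trunc h x)) ≤ h :=
      (order_le_iff _ hD).2 ⟨f, rfl⟩
    rw [if_pos this, ← Real.exp_sum, ← Finset.mul_sum, Ltree, sum_Lctx,
      sum_Lctx X Y D t (fun x => f (trunc h x))]
    simp only [trunc_self]
    ring

lemma dist {α : Type*} [Fintype α] [DecidableEq α] (a : α → Bool → ℝ) (c : Bool → ℝ) (x0 : α) :
    ∑ f : α → Bool, c (f x0) * ∏ x, a x (f x) =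
      (∏ x ∈ Finset.univ.erase x0, ∑ y, a x y) * ∑ y, c y * a x0 y := by
  have := Fintype.prod_sum (fun (x : α) (y : Bool) => (if x = x0 then c y else 1) * a x y)
  rw [← Finset.mul_prod_erase _ _ (Finset.mem_univ x0)] at this
  simp only [Finset.prod_mul_distrib, Finset.prod_ite_eq', Finset.mem_univ, if_true] at this
  rw [← this, mul_comm]
  congr 1
  refine Finset.prod_congr rfl fun x hx => ?_
  simp [Finset.ne_of_mem_erase hx]

lemma key2 {D : ℕ} (g : ℕ → ℝ) (η : ℝ) (t : ℕ)
    (X : ℕ → Fin D → Bool) (Y : ℕ → Bool) (c : Bool → ℝ) :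
    ∑ f : (Fin D → Bool) → Bool, c (f (X t)) * (pri D g f * Real.exp (-η * Ltree X Y f t)) =
      ∑ h ∈ Finset.range (D + 1), gEff X Y g η t h *
        ∑ y, c y * Real.exp (-η * Lctx X Y h (trunc h (X t)) t y) := by
  rw [key]
  refine Finset.sum_congr rfl fun h _ => ?_
  rw [dist (fun x y => Real.exp (-η * Lctx X Y h x t y)) c, gEff, mul_assoc]

/-- Equivalence of the naive and efficient updates.
For any positive prior function `g`, any learning rate `η > 0`, and any cumulative
contextual losses, the tree-expert exponential-weights update and the efficient
contextual update induce the same prediction distribution: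
`∑_{f : f(X_t) = y} w^tree_{t,f}(η; g) = w_{t,y}(η; g)` for every `y ∈ {0,1}`.
Equivalently, the key distributive-law identity
`∑_f (∑_{h = order f}^D g h) ∏_{x} e^{−η L_{x,t,f(x)}}
  = ∑_{h=0}^D g h ∏_{x(h)} (∑_y e^{−η L_{x(h),t,y}})` holds. -/
theorem naive_efficient_equivalence (D t : ℕ)
    (g : ℕ → ℝ) (hg : ∀ h, 0 < g h) (η : ℝ) (hη : 0 < η)
    (X : ℕ → Fin D → Bool) (Y : ℕ → Bool) :
    (∀ y : Bool,
      (∑ f : (Fin D → Bool) → Bool,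
          if f (X t) = y then pri D g f * Real.exp (-η * Ltree X Y f t) else 0) /
        (∑ f : (Fin D → Bool) → Bool, pri D g f * Real.exp (-η * Ltree X Y f t)) =
      (∑ h ∈ Finset.range (D + 1),
          gEff X Y g η t h * Real.exp (-η * Lctx X Y h (trunc h (X t)) t y)) /
        (∑ h ∈ Finset.range (D + 1),
          gEff X Y g η t h *
            (∑ y' : Bool, Real.exp (-η * Lctx X Y h (trunc h (X t)) t y')))) ∧
    (∑ f : (Fin D → Bool) → Bool,
        pri D g f * ∏ x : Fin D → Bool, Real.exp (-η * Lctx X Y D x t (f x))) =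
      ∑ h ∈ Finset.range (D + 1),
        g h * ∏ x : Fin h → Bool, (∑ y : Bool, Real.exp (-η * Lctx X Y h x t y)) := by
  have hden := key2 g η t X Y (fun _ => 1)
  simp only [one_mul] at hden
  refine ⟨fun y => ?_, ?_⟩
  · have hnum := key2 g η t X Y (fun z => if z = y then 1 else 0)
    simp only [ite_mul, one_mul, zero_mul, Finset.sum_ite_eq', Finset.mem_univ, if_true] at hnum
    rw [hden, hnum]
  · simp_rw [← Real.exp_sum, ← Finset.mul_sum]
    change ∑ f : (Fin D → Bool) → Bool, pri D g f * Real.exp (-η * Ltree X Y f t) = _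
    rw [hden]
    refine Finset.sum_congr rfl fun h _ => ?_
    rw [gEff, mul_assoc, Finset.prod_erase_mul _ _ (Finset.mem_univ _)]

end CTAH
end
end
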